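/- Let k ≥ 2 and let G be a finite k-connected simple graph of order n ≥ 4. Then G is k-color connectable and cc_k(G) = k. -/

import Mathlib

open SimpleGraph

/-- `c` is a `k`-color connecting edge-coloring of `G`: between every pair of distinct
vertices there is a path whose edges use at least `k` different colors. -/
def SimpleGraph.IsKColorConnecting {V : Type*} (G : SimpleGraph V) (k : ℕ)
    (c : Sym2 V → ℕ) : Prop :=
  ∀ u v : V, u ≠ v → ∃ p : G.Walk u v, p.IsPath ∧ k ≤ (p.edges.map c).toFinset.card

/-- `G` is `k`-color connectable: it admits a `k`-color connecting coloring. -/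
def SimpleGraph.KColorConnectable {V : Type*} (G : SimpleGraph V) (k : ℕ) : Prop :=
  ∃ c : Sym2 V → ℕ, G.IsKColorConnecting k c

/-- The `k`-color connection number `cc_k(G)`: the minimum number of colors used on the
edges of `G` by a `k`-color connecting coloring. -/
noncomputable def SimpleGraph.ccConn {V : Type*} (G : SimpleGraph V) (k : ℕ) : ℕ :=
  sInf {n : ℕ | ∃ c : Sym2 V → ℕ, G.IsKColorConnecting k c ∧ (c '' G.edgeSet).ncard = n}

/-- A graph is `k`-connected if it has more than `k` vertices and remains connected after
deleting any set of fewer than `k` vertices. -/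
def SimpleGraph.IsKConnectedGraph {V : Type*} (G : SimpleGraph V) (k : ℕ) : Prop :=
  k < Nat.card V ∧ ∀ S : Set V, S.Finite → S.ncard < k → (G.induce Sᶜ).Connected

/-!
A connecting coloring uses at least `k` colors, so it suffices to color the edges with `Fin k`
such that any two vertices are joined by a path meeting every color.

It is enough to color a subgraph `H` with at least two vertices so that any two vertices of `H`
are joined by such a path inside `H`: by Menger's theorem two given vertices of `G` are linked by
disjoint paths to two vertices of `H`, and the path inside `H` completes these to a path between
the given vertices. With `H` a single edge, this shows for `k = 2` that any two vertices are joined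
by a path through any prescribed edge; now give two disjoint edges one color and all other edges
the second one. Prescribing whichever of the two disjoint edges does not join the end vertices
makes the path have two consecutive edges, which cannot both be of the first color.

For `k ≥ 3` let `H` be a subdivided wheel with `k` spokes. Remove a vertex, the hub; the minimum
degree still forces a cycle of length at least `k`, the rim, and Menger's theorem supplies the
spokes. Each spoke gets its own color, shared with the rim edge that follows its foot. Two rim
vertices `u` and `v` cut the rim into two arcs. If both contain feet, walk from `u` and from `v` to
the last foot ahead in their arcs, and on to the hub: all colors have been met. If one contains no
foot, the other arc meets all colors by itself. For vertices inside spokes, walk outwards along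
one spoke, around the whole rim to the last foot of a third spoke, over the hub, and outwards along
the other spoke.
-/

/-- `JoinedWithin G c u v S K`: some path of `G` from `u` to `v` stays in the vertex set `S` and
meets every color of `K` under the edge-coloring `c`. It may meet further colors. -/
def JoinedWithin {V α : Type*} (G : SimpleGraph V) (c : Sym2 V → α) (u v : V) (S : Set V)
    (K : Set α) : Prop :=
  ∃ p : G.Walk u v, p.IsPath ∧ (∀ x ∈ p.support, x ∈ S) ∧ K ⊆ c '' p.edgeSet

section JoinedWithin

variable {V α : Type*} {G : SimpleGraph V} {c : Sym2 V → α} {u v w : V} {S T : Set V} {K L : Set α}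

theorem isPath_append {p : G.Walk u v} {q : G.Walk v w} (hp : p.IsPath) (hq : q.IsPath)
    (h : ∀ x ∈ p.support, x ∈ q.support → x = v) : (p.append q).IsPath := by
  have hv : v ∉ q.support.tail ∧ q.support.tail.Nodup := by
    rw [← List.nodup_cons, Walk.cons_tail_support]
    exact hq.support_nodup
  rw [Walk.isPath_def, Walk.support_append, List.nodup_append']
  refine ⟨hp.support_nodup, hv.2, fun x hxp hxq ↦ ?_⟩
  exact hv.1 (h x hxp (List.mem_of_mem_tail hxq) ▸ hxq)

namespace JoinedWithin

theorem mono (h : JoinedWithin G c u v S K) (hS : S ⊆ T) (hK : L ⊆ K) :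
    JoinedWithin G c u v T L := by
  obtain ⟨p, hp, hpS, hpK⟩ := h
  exact ⟨p, hp, fun x hx ↦ hS (hpS x hx), hK.trans hpK⟩

theorem symm (h : JoinedWithin G c u v S K) : JoinedWithin G c v u S K := by
  obtain ⟨p, hp, hpS, hpK⟩ := h
  exact ⟨p.reverse, hp.reverse, fun x hx ↦ hpS x (by simpa using hx), by simpa using hpK⟩

theorem trans (h : JoinedWithin G c u v S K) (h' : JoinedWithin G c v w T L)
    (hST : S ∩ T ⊆ {v}) : JoinedWithin G c u w (S ∪ T) (K ∪ L) := by
  obtain ⟨p, hp, hpS, hpK⟩ := h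
  obtain ⟨q, hq, hqT, hqL⟩ := h'
  refine ⟨p.append q, isPath_append hp hq fun x hxp hxq ↦ hST ⟨hpS x hxp, hqT x hxq⟩,
    fun x hx ↦ ?_, ?_⟩
  · exact ((Walk.mem_support_append_iff p q).1 hx).imp (hpS x) (hqT x)
  · rw [Walk.edgeSet_append, Set.image_union]
    exact Set.union_subset_union hpK hqL

theorem right_mem (h : JoinedWithin G c u v S K) : v ∈ S := by
  obtain ⟨p, -, hpS, -⟩ := h
  exact hpS v p.end_mem_support

theorem of_isPath {p : G.Walk u v} (hp : p.IsPath) :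
    JoinedWithin G c u v {x | x ∈ p.support} (c '' p.edgeSet) :=
  ⟨p, hp, fun _ hx ↦ hx, subset_rfl⟩

theorem refl (c : Sym2 V → α) (u : V) : JoinedWithin G c u u {u} ∅ :=
  ⟨.nil, by simp, by simp, Set.empty_subset _⟩

theorem of_adj (h : G.Adj u v) : JoinedWithin G c u v {u, v} {c s(u, v)} :=
  ⟨h.toWalk, by simp [h.ne], by simp, by simp⟩

theorem of_injOn {f : ℕ → V} {a b : ℕ} (hab : a ≤ b)
    (hadj : ∀ n ∈ Set.Ico a b, G.Adj (f n) (f (n + 1))) (hf : Set.InjOn f (Set.Icc a b)) :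
    JoinedWithin G c (f a) (f b) (f '' Set.Icc a b)
      ((fun n ↦ c s(f n, f (n + 1))) '' Set.Ico a b) := by
  induction b, hab using Nat.le_induction with
  | base => simpa using refl c (f a)
  | succ b hab ih =>
    have initial := ih (fun n hn ↦ hadj n ⟨hn.1, hn.2.trans b.lt_succ_self⟩)
      (hf.mono (Set.Icc_subset_Icc_right b.le_succ))
    have last : JoinedWithin G c (f b) (f (b + 1)) {f b, f (b + 1)} {c s(f b, f (b + 1))} :=
      of_adj (hadj b ⟨hab, b.lt_succ_self⟩)
    refine (initial.trans last ?_).mono ?_ ?_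
    · rintro _ ⟨⟨n, hn, rfl⟩, h | h⟩
      · exact h
      · have := hf ⟨hn.1, hn.2.trans b.le_succ⟩ ⟨hab.trans b.le_succ, le_rfl⟩ h
        exact absurd hn.2 (by lia)
    · rintro _ (⟨n, hn, rfl⟩ | rfl | rfl)
      exacts [⟨n, ⟨hn.1, hn.2.trans b.le_succ⟩, rfl⟩, ⟨b, ⟨hab, b.le_succ⟩, rfl⟩,
        ⟨b + 1, ⟨hab.trans b.le_succ, le_rfl⟩, rfl⟩]
    · rintro _ ⟨n, hn, rfl⟩
      rcases (Nat.lt_succ_iff.1 hn.2).lt_or_eq with h | rfl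
      exacts [.inl ⟨n, ⟨hn.1, h⟩, rfl⟩, .inr rfl]

end JoinedWithin

end JoinedWithin

section Menger

variable {V ι : Type*} {G : SimpleGraph V} {A B : Set V}

/-- `S` separates `A` from `B` in `G`: every walk from `A` to `B` meets `S`. Vertices of `A` and
of `B` are allowed in `S`, and `A ∩ B` has to be contained in it. -/
def IsSeparator (G : SimpleGraph V) (A B S : Set V) : Prop :=
  ∀ a ∈ A, ∀ b ∈ B, ∀ p : G.Walk a b, ∃ x ∈ p.support, x ∈ S

/-- Pairwise vertex-disjoint paths from `A` to `B`, indexed by `ι`, each of which meets `B` only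
in its last vertex. -/
structure Linkage (G : SimpleGraph V) (A B : Set V) (ι : Type*) where
  source : ι → V
  target : ι → V
  path : ∀ i, G.Walk (source i) (target i)
  isPath : ∀ i, (path i).IsPath
  source_mem : ∀ i, source i ∈ A
  target_mem : ∀ i, target i ∈ B
  eq_target : ∀ i, ∀ x ∈ (path i).support, x ∈ B → x = target i
  eq_of_mem_support : ∀ i j x, x ∈ (path i).support → x ∈ (path j).support → i = j

namespace Linkage

variable (L : Linkage G A B ι)

theorem source_injective : L.source.Injective := fun i j h ↦
  L.eq_of_mem_support i j _ (L.path i).start_mem_support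
    (by rw [h]; exact (L.path j).start_mem_support)

theorem target_injective : L.target.Injective := fun i j h ↦
  L.eq_of_mem_support i j _ (L.path i).end_mem_support
    (by rw [h]; exact (L.path j).end_mem_support)

theorem joinedWithin_source {α : Type*} {c : Sym2 V → α} {K : Set α} {i j : ι} (hij : i ≠ j)
    (h : JoinedWithin G c (L.target i) (L.target j) B K) :
    JoinedWithin G c (L.source i) (L.source j) Set.univ K := by
  have toward := fun i ↦ JoinedWithin.of_isPath (c := c) (L.isPath i)
  refine (((toward i).trans h ?_).trans (toward j).symm ?_).mono
    (Set.subset_univ _) (Set.subset_union_right.trans Set.subset_union_left)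
  · rintro x ⟨hxi, hxB⟩
    exact L.eq_target i x hxi hxB
  · rintro x ⟨hxi | hxB, hxj⟩
    exacts [absurd (L.eq_of_mem_support i j x hxi hxj) hij, L.eq_target j x hxj hxB]

end Linkage

theorem isSeparator_sdiff {N X : Set V} (hA : A ⊆ N) (hN : ∀ x ∈ X, G.neighborSet x ⊆ N)
    (hXB : Disjoint X B) : IsSeparator G A B (N \ X) := by
  intro a ha b hb p
  by_cases haX : a ∈ X
  · obtain ⟨d, hd, hfst, hsnd⟩ :=
      p.exists_boundary_dart X haX fun hbX ↦ hXB.notMem_of_mem_left hbX hb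
    exact ⟨d.snd, p.dart_snd_mem_support_of_mem_darts hd, hN _ hfst d.adj, hsnd⟩
  · exact ⟨a, p.start_mem_support, hA ha, haX⟩

/-- Hall's marriage theorem, with one agent for each required path (asking for a vertex of `A`) and
one for each vertex `v ∉ B` (asking for `v` itself or a neighbor of `v`). -/
theorem exists_injective_step [Finite V] [Fintype ι]
    (h : ∀ S, IsSeparator G A B S → Fintype.card ι ≤ S.ncard) :
    ∃ g : ι ⊕ {v // v ∉ B} → V, g.Injective ∧ (∀ i, g (.inl i) ∈ A) ∧
      ∀ v, g (.inr v) = v ∨ G.Adj v (g (.inr v)) := by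
  classical
  have := Fintype.ofFinite V
  let R : ι ⊕ {v // v ∉ B} → V → Prop :=
    Sum.elim (fun _ w ↦ w ∈ A) fun v w ↦ w = v ∨ G.Adj v w
  suffices hall : ∀ J : Finset (ι ⊕ {v // v ∉ B}), J.card ≤ {w | ∃ a ∈ J, R a w}.ncard by
    obtain ⟨g, hg, hgR⟩ := (Fintype.all_card_le_filter_rel_iff_exists_injective R).1 fun J ↦ by
      simpa [← Set.ncard_coe_finset] using hall J
    exact ⟨g, hg, fun i ↦ hgR (.inl i), fun v ↦ hgR (.inr v)⟩
  intro J
  set N : Set V := {w | ∃ a ∈ J, R a w}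
  set X : Set V := (↑) '' (J.toRight : Set {v // v ∉ B}) with hX
  have hXN : X ⊆ N := by
    rintro _ ⟨v, hv, rfl⟩
    exact ⟨.inr v, Finset.mem_toRight.1 hv, .inl rfl⟩
  have cardX : X.ncard = J.toRight.card := by
    rw [hX, Set.ncard_image_of_injective _ Subtype.val_injective, Set.ncard_coe_finset]
  have cardJ : J.toLeft.card + X.ncard = J.card := cardX ▸ J.card_toLeft_add_card_toRight
  rcases J.toLeft.eq_empty_or_nonempty with hleft | ⟨i, hi⟩
  · rw [hleft, Finset.card_empty, zero_add] at cardJ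
    exact cardJ ▸ Set.ncard_le_ncard hXN
  · have hsep : IsSeparator G A B (N \ X) := by
      refine isSeparator_sdiff (fun a ha ↦ ⟨.inl i, Finset.mem_toLeft.1 hi, ha⟩) ?_ ?_
      · rintro _ ⟨v, hv, rfl⟩ w hw
        exact ⟨.inr v, Finset.mem_toRight.1 hv, .inr hw⟩
      · exact Set.disjoint_left.2 fun _ ⟨v, _, hv⟩ ↦ hv ▸ v.2
    have := h _ hsep
    have := Set.ncard_sdiff_add_ncard_of_subset hXN
    have := J.toLeft.card_le_univ
    lia

theorem iterate_eq_iterate_of_injOn_compl {α : Type*} {s : ι → α} {f : α → α} {B : Set α}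
    (hs : s.Injective) (hf : Set.InjOn f Bᶜ) (hsf : ∀ i, ∀ v ∉ B, s i ≠ f v) {m n : ℕ} {i j : ι}
    (hi : ∀ x < m, f^[x] (s i) ∉ B) (hj : ∀ y < n, f^[y] (s j) ∉ B)
    (h : f^[m] (s i) = f^[n] (s j)) : i = j ∧ m = n := by
  induction m generalizing n with
  | zero =>
    cases n with
    | zero => exact ⟨hs h, rfl⟩
    | succ n =>
      rw [Function.iterate_succ_apply'] at h
      exact absurd h (hsf i _ (hj n n.lt_succ_self))
  | succ m ih =>
    rw [Function.iterate_succ_apply'] at h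
    cases n with
    | zero => exact absurd h.symm (hsf j _ (hi m m.lt_succ_self))
    | succ n =>
      rw [Function.iterate_succ_apply'] at h
      obtain ⟨hij, hmn⟩ := ih (fun x hx ↦ hi x (hx.trans m.lt_succ_self))
        (fun y hy ↦ hj y (hy.trans n.lt_succ_self))
        (hf (hi m m.lt_succ_self) (hj n n.lt_succ_self) h)
      exact ⟨hij, congrArg _ hmn⟩

theorem exists_iterate_mem_of_injOn_compl {α : Type*} [Finite α] {s : ι → α} {f : α → α} {B : Set α}
    (hs : s.Injective) (hf : Set.InjOn f Bᶜ) (hsf : ∀ i, ∀ v ∉ B, s i ≠ f v) (i : ι) :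
    ∃ n, f^[n] (s i) ∈ B := by
  by_contra! h
  exact not_injective_infinite_finite (fun n ↦ f^[n] (s i)) fun m n hmn ↦
    (iterate_eq_iterate_of_injOn_compl hs hf hsf (fun x _ ↦ h x) (fun y _ ↦ h y) hmn).2

theorem nonempty_linkage_of_injOn_compl [Finite V] {s : ι → V} {f : V → V} (hs : s.Injective)
    (hf : Set.InjOn f Bᶜ) (hsf : ∀ i, ∀ v ∉ B, s i ≠ f v) (hsA : ∀ i, s i ∈ A)
    (hfG : ∀ v ∉ B, f v = v ∨ G.Adj v (f v)) : Nonempty (Linkage G A B ι) := by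
  classical
  have hits := exists_iterate_mem_of_injOn_compl hs hf hsf
  let m : ι → ℕ := fun i ↦ Nat.find (hits i)
  have notMem_of_lt : ∀ i, ∀ x < m i, f^[x] (s i) ∉ B := fun i x hx ↦ Nat.find_min (hits i) hx
  have orbit_inj : ∀ {i j x y}, x ≤ m i → y ≤ m j → f^[x] (s i) = f^[y] (s j) → i = j ∧ x = y :=
    fun hx hy ↦ iterate_eq_iterate_of_injOn_compl hs hf hsf
      (fun z hz ↦ notMem_of_lt _ z (hz.trans_le hx)) (fun z hz ↦ notMem_of_lt _ z (hz.trans_le hy))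
  have orbit_adj : ∀ i, ∀ n ∈ Set.Ico 0 (m i), G.Adj (f^[n] (s i)) (f^[n + 1] (s i)) := by
    intro i n hn
    rw [Function.iterate_succ_apply']
    refine (hfG _ (notMem_of_lt i n hn.2)).resolve_left fun hfix ↦ ?_
    rw [← Function.iterate_succ_apply' (f := f)] at hfix
    exact n.succ_ne_self (orbit_inj (Nat.succ_le_of_lt hn.2) hn.2.le hfix).2
  have joined := fun i ↦ JoinedWithin.of_injOn (c := id) (m i).zero_le (orbit_adj i)
    fun x hx y hy hxy ↦ (orbit_inj hx.2 hy.2 hxy).2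
  choose p hp hsupp _ using joined
  refine ⟨⟨s, fun i ↦ f^[m i] (s i), p, hp, hsA, fun i ↦ Nat.find_spec (hits i), ?_, ?_⟩⟩
  · intro i x hx hxB
    obtain ⟨n, hn, rfl⟩ := hsupp i x hx
    rcases hn.2.lt_or_eq with hlt | rfl
    exacts [absurd hxB (notMem_of_lt i n hlt), rfl]
  · intro i j x hx hx'
    obtain ⟨n, hn, rfl⟩ := hsupp i x hx
    obtain ⟨n', hn', heq⟩ := hsupp j _ hx'
    exact (orbit_inj hn'.2 hn.2 heq).1.symm

/-- Menger's theorem, read off from the orbits of the injection given by Hall's theorem. -/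
theorem nonempty_linkage [Finite V] [Fintype ι]
    (h : ∀ S, IsSeparator G A B S → Fintype.card ι ≤ S.ncard) : Nonempty (Linkage G A B ι) := by
  classical
  obtain ⟨g, hg, hgA, hgG⟩ := exists_injective_step h
  let f : V → V := fun v ↦ if hv : v ∉ B then g (.inr ⟨v, hv⟩) else v
  have f_apply : ∀ v (hv : v ∉ B), f v = g (.inr ⟨v, hv⟩) := fun v hv ↦ dif_pos hv
  refine nonempty_linkage_of_injOn_compl (f := f) (hg.comp Sum.inl_injective) ?_ ?_ hgA ?_
  · intro v hv w hw hvw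
    rw [f_apply v hv, f_apply w hw] at hvw
    exact congrArg Subtype.val (Sum.inr_injective (hg hvw))
  · intro i v hv hiv
    rw [f_apply v hv] at hiv
    exact Sum.inl_ne_inr (hg hiv)
  · intro v hv
    rw [f_apply v hv]
    exact hgG ⟨v, hv⟩

end Menger

section Connectivity

variable {V : Type*} {G : SimpleGraph V} {k : ℕ}

theorem isKConnectedGraph_mono {j : ℕ} (hG : G.IsKConnectedGraph k) (hjk : j ≤ k) :
    G.IsKConnectedGraph j :=
  ⟨hjk.trans_lt hG.1, fun S hS hSj ↦ hG.2 S hS (hSj.trans_le hjk)⟩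

theorem exists_isPath_avoiding [Finite V] (hG : G.IsKConnectedGraph k) {S : Set V}
    (hS : S.ncard < k) {x y : V} (hx : x ∉ S) (hy : y ∉ S) :
    ∃ p : G.Walk x y, p.IsPath ∧ ∀ z ∈ p.support, z ∉ S := by
  obtain ⟨p, hp⟩ := (hG.2 S S.toFinite hS).exists_isPath ⟨x, hx⟩ ⟨y, hy⟩
  refine ⟨p.map (Embedding.induce Sᶜ).toHom, hp.map Subtype.val_injective, fun z hz ↦ ?_⟩
  obtain ⟨w, -, rfl⟩ := List.mem_map.1 (p.support_map _ ▸ hz)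
  exact w.2

theorem le_ncard_of_isSeparator [Finite V] (hG : G.IsKConnectedGraph k) {A B S : Set V}
    (hA : k ≤ A.ncard) (hB : k ≤ B.ncard) (hS : IsSeparator G A B S) : k ≤ S.ncard := by
  by_contra! hlt
  obtain ⟨a, haA, haS⟩ := Set.exists_mem_notMem_of_ncard_lt_ncard (hlt.trans_le hA)
  obtain ⟨b, hbB, hbS⟩ := Set.exists_mem_notMem_of_ncard_lt_ncard (hlt.trans_le hB)
  obtain ⟨p, -, hp⟩ := exists_isPath_avoiding hG hlt haS hbS
  obtain ⟨x, hx, hxS⟩ := hS a haA b hbB p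
  exact hp x hx hxS

theorem le_ncard_neighborSet [Finite V] (hG : G.IsKConnectedGraph k) (v : V) :
    k ≤ (G.neighborSet v).ncard := by
  by_contra! hlt
  have card_closed : (insert v (G.neighborSet v)).ncard ≤ k :=
    (Set.ncard_insert_le _ _).trans hlt
  obtain ⟨w, -, hw⟩ : ∃ w ∈ Set.univ, w ∉ insert v (G.neighborSet v) :=
    Set.exists_mem_notMem_of_ncard_lt_ncard (by simpa using card_closed.trans_lt hG.1)
  rw [Set.mem_insert_iff, not_or] at hw
  obtain ⟨p, -, hp⟩ := exists_isPath_avoiding hG hlt G.notMem_neighborSet_self hw.2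
  have hp_nil : ¬p.Nil := fun h ↦ hw.1 h.eq.symm
  exact hp p.snd (p.getVert_mem_support 1) (p.adj_snd hp_nil)

theorem exists_joinedWithin_extension {α : Type*} [Finite V] (hG : G.IsKConnectedGraph 2)
    {H : Set V} (hH : 2 ≤ H.ncard) {u v : V} (huv : u ≠ v) (c : Sym2 V → α) :
    ∃ x ∈ H, ∃ y ∈ H, x ≠ y ∧ ∀ K, JoinedWithin G c x y H K → JoinedWithin G c u v Set.univ K := by
  obtain ⟨L⟩ : Nonempty (Linkage G {u, v} H Bool) := nonempty_linkage fun S hS ↦ by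
    simpa using le_ncard_of_isSeparator hG (Set.ncard_pair huv).ge hH hS
  have source_ne : L.source true ≠ L.source false := L.source_injective.ne (by simp)
  obtain ⟨i, j, hi, hj⟩ : ∃ i j, L.source i = u ∧ L.source j = v := by
    rcases L.source_mem true with ht | ht <;> rcases L.source_mem false with hf | hf
    exacts [absurd (ht.trans hf.symm) source_ne, ⟨_, _, ht, hf⟩, ⟨_, _, hf, ht⟩,
      absurd (ht.trans hf.symm) source_ne]
  have hij : i ≠ j := fun h ↦ huv (hi.symm.trans ((congrArg _ h).trans hj))
  exact ⟨_, L.target_mem i, _, L.target_mem j, L.target_injective.ne hij,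
    fun K hK ↦ by simpa only [hi, hj] using L.joinedWithin_source hij hK⟩

end Connectivity

section TwoColors

variable {V : Type*} {G : SimpleGraph V} {u v : V}

theorem exists_isPath_mem_edges [Finite V] (hG : G.IsKConnectedGraph 2) (huv : u ≠ v)
    {e : Sym2 V} (he : e ∈ G.edgeSet) : ∃ p : G.Walk u v, p.IsPath ∧ e ∈ p.edges := by
  induction e with
  | h a b =>
    have hab : G.Adj a b := he
    obtain ⟨x, hx, y, hy, hxy, extend⟩ :=
      exists_joinedWithin_extension hG (Set.ncard_pair hab.ne).ge huv id
    have through : JoinedWithin G id x y {a, b} {s(a, b)} := by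
      rcases hx with rfl | rfl <;> rcases hy with rfl | rfl
      exacts [absurd rfl hxy, .of_adj hab, (JoinedWithin.of_adj hab).symm, absurd rfl hxy]
    obtain ⟨p, hp, -, hpe⟩ := extend _ through
    exact ⟨p, hp, by simpa using hpe⟩

theorem exists_disjoint_edges [Finite V] (hV : 4 ≤ Nat.card V)
    (hdeg : ∀ v, 2 ≤ (G.neighborSet v).ncard) :
    ∃ e ∈ G.edgeSet, ∃ f ∈ G.edgeSet, ∀ x ∈ e, x ∉ f := by
  obtain ⟨a⟩ : Nonempty V := (Nat.card_pos_iff.1 (by lia)).1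
  obtain ⟨b, hab : G.Adj a b⟩ := Set.nonempty_of_ncard_ne_zero (two_pos.trans_le (hdeg a)).ne'
  obtain ⟨c, hc, d, hd, hcd⟩ := (Set.one_lt_ncard (s := {a, b}ᶜ)).1 (by
    rw [Set.ncard_compl, Set.ncard_pair hab.ne]
    lia)
  by_contra! h
  have adj_both : ∀ x ∈ ({a, b} : Set V)ᶜ, G.neighborSet x = {a, b} := fun x hx ↦ by
    refine Set.eq_of_subset_of_ncard_le (fun y hxy ↦ ?_) ((Set.ncard_pair hab.ne).trans_le (hdeg x))
    obtain ⟨z, hz, hz'⟩ := h s(a, b) hab s(x, y) hxy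
    grind
  obtain ⟨z, hz, hz'⟩ := h s(c, a) (show a ∈ G.neighborSet c by simp [adj_both c hc])
    s(d, b) (show b ∈ G.neighborSet d by simp [adj_both d hd])
  have := hab.ne
  grind

theorem exists_mem_edges_notMem {M : Set (Sym2 V)}
    (hM : ∀ e ∈ M, ∀ f ∈ M, ∀ x ∈ e, x ∈ f → e = f) {p : G.Walk u v} (hp : p.IsPath) {e : Sym2 V}
    (he : e ∈ p.edges) (hne : e ≠ s(u, v)) : ∃ f ∈ p.edges, f ∉ M := by
  by_contra! h
  cases p with
  | nil => simp at he
  | @cons _ w _ huw q =>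
    cases q with
    | nil => simp_all
    | @cons _ x _ hwx q =>
      have := hM s(u, w) (h _ (by simp)) s(w, x) (h _ (by simp)) w (Sym2.mem_mk_right u w)
        (Sym2.mem_mk_left w x)
      obtain rfl : u = x := by grind
      simp at hp

theorem exists_two_coloring_of_isKConnectedGraph [Finite V] (hV : 4 ≤ Nat.card V)
    (hG : G.IsKConnectedGraph 2) :
    ∃ c : Sym2 V → Fin 2, ∀ u v, u ≠ v → JoinedWithin G c u v Set.univ Set.univ := by
  classical
  obtain ⟨e, he, f, hf, hef⟩ := exists_disjoint_edges hV (le_ncard_neighborSet hG)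
  have matching : ∀ g ∈ ({e, f} : Set (Sym2 V)), ∀ g' ∈ ({e, f} : Set (Sym2 V)),
      ∀ x ∈ g, x ∈ g' → g = g' := by
    grind
  have e_ne_f : e ≠ f := by
    rintro rfl
    exact hef _ e.out_fst_mem e.out_fst_mem
  refine ⟨fun g ↦ if g ∈ ({e, f} : Set (Sym2 V)) then 0 else 1, fun u v huv ↦ ?_⟩
  obtain ⟨g, hg, hgG, hguv⟩ : ∃ g ∈ ({e, f} : Set (Sym2 V)), g ∈ G.edgeSet ∧ g ≠ s(u, v) := by
    by_cases h : e = s(u, v)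
    exacts [⟨f, by simp, hf, h ▸ e_ne_f.symm⟩, ⟨e, by simp, he, h⟩]
  obtain ⟨p, hp, hgp⟩ := exists_isPath_mem_edges hG huv hgG
  obtain ⟨g', hg'p, hg'⟩ := exists_mem_edges_notMem matching hp hgp hguv
  refine ⟨p, hp, fun x _ ↦ Set.mem_univ x, fun i _ ↦ ?_⟩
  fin_cases i
  exacts [⟨g, hgp, if_pos hg⟩, ⟨g', hg'p, if_neg hg'⟩]

end TwoColors

section LongCycle

variable {V : Type*} {G : SimpleGraph V} {d : ℕ} {u v : V}

theorem exists_le_adj_getVert (p : G.Walk u v) (hd₀ : 0 < d)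
    (hd : d ≤ (G.neighborSet u).ncard) (hp : G.neighborSet u ⊆ {x | x ∈ p.support}) :
    ∃ n, d ≤ n ∧ n ≤ p.length ∧ G.Adj u (p.getVert n) := by
  by_contra! h
  have subset_image : G.neighborSet u ⊆ p.getVert '' Set.Ioo 0 d := fun x (hx : G.Adj u x) ↦ by
    obtain ⟨n, rfl, hn⟩ := Walk.mem_support_iff_exists_getVert.1 (hp hx)
    refine ⟨n, ⟨Nat.pos_of_ne_zero ?_, not_le.1 fun hdn ↦ h n hdn hn hx⟩, rfl⟩
    rintro rfl
    simp at hx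
  have card_lt : (p.getVert '' Set.Ioo 0 d).ncard < d := by
    refine (Set.ncard_image_le (Set.finite_Ioo 0 d)).trans_lt ?_
    rw [← Finset.coe_Ioo, Set.ncard_coe_finset, Nat.card_Ioo]
    lia
  have := Set.ncard_le_ncard subset_image ((Set.finite_Ioo 0 d).image _)
  lia

theorem isCycle_cons_take {p : G.Walk u v} (hp : p.IsPath) {n : ℕ} (hn : 2 ≤ n)
    (hnp : n ≤ p.length) (h : G.Adj (p.getVert n) u) : (Walk.cons h (p.take n)).IsCycle := by
  refine (Walk.cons_isCycle_iff _ h).2 ⟨hp.take n, fun hmem ↦ ?_⟩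
  have := (hp.take n).eq_snd_of_mem_edges (Sym2.eq_swap ▸ hmem)
  rw [Walk.snd, Walk.take_getVert, min_eq_right (by lia)] at this
  have := hp.getVert_injOn (show n ≤ p.length from hnp) (show 1 ≤ p.length by lia) this
  lia

/-- The first vertex of a longest path has all its neighbors on that path. -/
theorem exists_isCycle_lt_length [Finite V] (hd : 2 ≤ d) (hG : G ≠ ⊥)
    (hdeg : ∀ v ∈ G.support, d ≤ (G.neighborSet v).ncard) :
    ∃ (v : V) (C : G.Walk v v), C.IsCycle ∧ d < C.length := by
  obtain ⟨a, b, hab⟩ := SimpleGraph.ne_bot_iff_exists_adj.1 hG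
  have : Nonempty V := ⟨a⟩
  obtain ⟨u, v, p, hp, longest⟩ :=
    Walk.exists_isPath_forall_isPath_length_le_length G
  have pos : 0 < p.length := by
    simpa [Nat.succ_le_iff] using longest _ _ (Walk.cons hab .nil) (by simp [hab.ne])
  have neighbors_mem : G.neighborSet u ⊆ {x | x ∈ p.support} := by
    intro x (hx : G.Adj u x)
    by_contra hxp
    simpa using longest _ _ (Walk.cons hx.symm p) (hp.cons hxp)
  have hu : u ∈ G.support := ⟨p.snd, p.adj_snd (Walk.not_nil_iff_lt_length.2 pos)⟩
  obtain ⟨n, hdn, hnp, hadj⟩ :=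
    exists_le_adj_getVert p (two_pos.trans_le hd) (hdeg u hu) neighbors_mem
  refine ⟨_, _, isCycle_cons_take hp (hd.trans hdn) hnp hadj.symm, ?_⟩
  rw [Walk.length_cons, Walk.take_length, min_eq_left hnp]
  lia

theorem length_le_ncard_support {C : G.Walk v v} (hC : C.IsCycle) :
    C.length ≤ {x | x ∈ C.support}.ncard := by
  classical
  have card_tail : C.support.tail.toFinset.card = C.length := by
    rw [List.toFinset_card_of_nodup hC.support_nodup, List.length_tail, Walk.length_support,
      Nat.add_sub_cancel]
  rw [← card_tail, ← Set.ncard_coe_finset]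
  exact Set.ncard_le_ncard (fun x hx ↦ List.mem_of_mem_tail (List.mem_toFinset.1 hx))
    C.support.finite_toSet

end LongCycle

/-- A cycle `rim`, a vertex `hub` off the cycle, and paths `spoke i` from the hub to distinct
vertices `foot i` of the rim that are disjoint apart from the hub and meet the rim only in their
feet: a subdivision of a wheel, with spokes indexed by `ι`. -/
structure SubdividedWheel {V : Type*} (G : SimpleGraph V) (ι : Type*) where
  base : V
  rim : G.Walk base base
  rim_isCycle : rim.IsCycle
  hub : V
  hub_notMem_rim : hub ∉ rim.support
  foot : ι → V
  foot_mem_rim : ∀ i, foot i ∈ rim.support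
  spoke : ∀ i, G.Walk hub (foot i)
  spoke_isPath : ∀ i, (spoke i).IsPath
  eq_foot : ∀ i, ∀ x ∈ (spoke i).support, x ∈ rim.support → x = foot i
  eq_hub : ∀ i j, i ≠ j → ∀ x, x ∈ (spoke i).support → x ∈ (spoke j).support → x = hub

namespace SubdividedWheel

variable {V ι : Type*} {G : SimpleGraph V} (W : SubdividedWheel G ι)

theorem foot_injective : W.foot.Injective := fun i j h ↦ by
  by_contra hij
  have foot_eq_hub := W.eq_hub i j hij _ (W.spoke i).end_mem_support
    (by rw [h]; exact (W.spoke j).end_mem_support)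
  exact W.hub_notMem_rim (foot_eq_hub ▸ W.foot_mem_rim i)

/-- All vertices on the rim and on the spokes. -/
def verts : Set V :=
  {x | x ∈ W.rim.support ∨ ∃ i, x ∈ (W.spoke i).support}

theorem rim_subset_verts : {x | x ∈ W.rim.support} ⊆ W.verts :=
  fun _ ↦ .inl

theorem two_le_ncard_verts [Finite V] : 2 ≤ W.verts.ncard :=
  (Nat.le_succ 2).trans <| W.rim_isCycle.three_le_length.trans <|
    (length_le_ncard_support W.rim_isCycle).trans <| Set.ncard_le_ncard W.rim_subset_verts

theorem getVert_image_subset_verts (i : ι) (s : Set ℕ) : (W.spoke i).getVert '' s ⊆ W.verts := by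
  rintro _ ⟨n, -, rfl⟩
  exact .inr ⟨i, (W.spoke i).getVert_mem_support n⟩

section Rim

/-- The `t`-th vertex of the rim, where `t` runs around the rim cyclically. -/
def rimVert (t : ℕ) : V :=
  W.rim.getVert (t % W.rim.length)

/-- The vertices of the rim with cyclic indices in `[a, b)`. -/
def arc (a b : ℕ) : Set V :=
  W.rimVert '' Set.Ico a b

theorem three_le_length_rim : 3 ≤ W.rim.length :=
  W.rim_isCycle.three_le_length

theorem length_rim_pos : 0 < W.rim.length :=
  three_pos.trans_le W.three_le_length_rim

theorem rimVert_mem_rim (t : ℕ) : W.rimVert t ∈ W.rim.support :=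
  W.rim.getVert_mem_support _

theorem rimVert_eq_rimVert_iff {s t : ℕ} :
    W.rimVert s = W.rimVert t ↔ s ≡ t [MOD W.rim.length] := by
  have mod_le := fun t ↦ Nat.le_sub_one_of_lt (Nat.mod_lt t W.length_rim_pos)
  exact ⟨fun h ↦ W.rim_isCycle.getVert_injOn' (mod_le s) (mod_le t) h, congrArg W.rim.getVert⟩

theorem rimVert_add_length (t : ℕ) : W.rimVert (t + W.rim.length) = W.rimVert t :=
  W.rimVert_eq_rimVert_iff.2 (Nat.add_modEq_right ..)

theorem rimVert_eq_getVert {t : ℕ} (ht : t ≤ W.rim.length) : W.rimVert t = W.rim.getVert t := by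
  rcases ht.lt_or_eq with h | rfl
  · rw [rimVert, Nat.mod_eq_of_lt h]
  · rw [rimVert, Nat.mod_self, Walk.getVert_zero, Walk.getVert_length]

theorem rimVert_adj (t : ℕ) : G.Adj (W.rimVert t) (W.rimVert (t + 1)) := by
  have hlt := Nat.mod_lt t W.length_rim_pos
  have hsucc : W.rimVert (t + 1) = W.rimVert (t % W.rim.length + 1) :=
    W.rimVert_eq_rimVert_iff.2 ((Nat.mod_modEq t _).symm.add_right 1)
  rw [hsucc, W.rimVert_eq_getVert hlt]
  exact W.rim.adj_getVert_succ hlt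

theorem injOn_rimVert (a : ℕ) : Set.InjOn W.rimVert (Set.Ico a (a + W.rim.length)) :=
  fun s hs t ht h ↦ by
  have hmod := W.rimVert_eq_rimVert_iff.1 h
  exact le_antisymm (hmod.le_of_lt_add (hs.2.trans_le (Nat.add_le_add_right ht.1 _)))
    (hmod.symm.le_of_lt_add (ht.2.trans_le (Nat.add_le_add_right hs.1 _)))

theorem arc_subset_rim (a b : ℕ) : W.arc a b ⊆ {x | x ∈ W.rim.support} := by
  rintro _ ⟨t, -, rfl⟩
  exact W.rimVert_mem_rim t

theorem arc_add_length (a : ℕ) : W.arc a (a + W.rim.length) = {x | x ∈ W.rim.support} := by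
  refine (W.arc_subset_rim _ _).antisymm fun x hx ↦ ?_
  obtain ⟨n, rfl, hn⟩ := Walk.mem_support_iff_exists_getVert.1 hx
  have hmod : n % W.rim.length ∈ (Finset.Ico a (a + W.rim.length)).image (· % W.rim.length) := by
    rw [Nat.image_Ico_mod]
    exact Finset.mem_range.2 (Nat.mod_lt n W.length_rim_pos)
  obtain ⟨t, ht, htn⟩ := Finset.mem_image.1 hmod
  rw [← W.rimVert_eq_getVert hn]
  exact ⟨t, Finset.mem_Ico.1 ht, W.rimVert_eq_rimVert_iff.2 htn⟩

theorem arc_union_arc {a b d : ℕ} (hab : a ≤ b) (hbd : b ≤ d) :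
    W.arc a b ∪ W.arc b d = W.arc a d := by
  rw [arc, arc, ← Set.image_union, Set.Ico_union_Ico_eq_Ico hab hbd, arc]

theorem disjoint_arc_arc {a b d : ℕ} (hab : a ≤ b) (hd : d ≤ a + W.rim.length) :
    Disjoint (W.arc a b) (W.arc b d) := by
  refine Set.disjoint_image_image fun s hs t ht h ↦ ?_
  have hlt : s < t := hs.2.trans_le ht.1
  have htd : t < a + W.rim.length := ht.2.trans_le hd
  exact hlt.ne (W.injOn_rimVert a ⟨hs.1, hlt.trans htd⟩ ⟨hab.trans ht.1, htd⟩ h)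

end Rim

section Shaft

/-- The vertices of the `i`-th spoke, including the hub but not the foot. -/
def shaft (i : ι) : Set V :=
  {x | x ∈ (W.spoke i).support ∧ x ∉ W.rim.support}

theorem getVert_mem_shaft {i : ι} {y : ℕ} (hy : y < (W.spoke i).length) :
    (W.spoke i).getVert y ∈ W.shaft i := by
  refine ⟨(W.spoke i).getVert_mem_support y, fun hrim ↦ hy.ne ?_⟩
  refine (W.spoke_isPath i).getVert_injOn (show y ≤ _ from hy.le)
    (show (W.spoke i).length ≤ _ from le_rfl) ?_
  rw [Walk.getVert_length, W.eq_foot i _ ((W.spoke i).getVert_mem_support y) hrim]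

theorem getVert_ne_hub {i : ι} {x : ℕ} (hx : 0 < x) (hxi : x ≤ (W.spoke i).length) :
    (W.spoke i).getVert x ≠ W.hub := fun h ↦ by
  refine hx.ne' ((W.spoke_isPath i).getVert_injOn (show x ≤ _ from hxi) (Nat.zero_le _) ?_)
  rw [h, Walk.getVert_zero]

theorem exists_getVert_eq_of_mem_shaft {i : ι} {x : V} (hx : x ∈ W.shaft i) :
    ∃ y < (W.spoke i).length, (W.spoke i).getVert y = x := by
  obtain ⟨y, rfl, hy⟩ := Walk.mem_support_iff_exists_getVert.1 hx.1
  refine ⟨y, hy.lt_of_ne fun h ↦ hx.2 ?_, rfl⟩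
  rw [h, Walk.getVert_length]
  exact W.foot_mem_rim i

theorem shaft_subset_verts (i : ι) : W.shaft i ⊆ W.verts :=
  fun _ hx ↦ .inr ⟨i, hx.1⟩

theorem length_spoke_pos (i : ι) : 0 < (W.spoke i).length := by
  refine Walk.not_nil_iff_lt_length.1 fun h ↦ W.hub_notMem_rim ?_
  exact h.eq ▸ W.foot_mem_rim i

theorem shaft_inter_shaft_subset {i j : ι} (hij : i ≠ j) : W.shaft i ∩ W.shaft j ⊆ {W.hub} :=
  fun x hx ↦ W.eq_hub i j hij x hx.1.1 hx.2.1

theorem arm_inter_arm_subset {S T : Set V} (hS : S ⊆ {x | x ∈ W.rim.support})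
    (hT : T ⊆ {x | x ∈ W.rim.support}) (hST : Disjoint S T) {i j : ι} (hij : i ≠ j) :
    (S ∪ W.shaft i) ∩ (T ∪ W.shaft j) ⊆ {W.hub} := by
  rintro x ⟨hxS | hxi, hxT | hxj⟩
  exacts [(hST.notMem_of_mem_left hxS hxT).elim, (hxj.2 (hS hxS)).elim, (hxi.2 (hT hxT)).elim,
    W.shaft_inter_shaft_subset hij ⟨hxi, hxj⟩]

theorem eq_rimVert_or_eq_getVert {x : V} (hx : x ∈ W.verts) :
    (∃ t < W.rim.length, W.rimVert t = x) ∨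
      ∃ i, ∃ y < (W.spoke i).length, (W.spoke i).getVert y = x := by
  by_cases hrim : x ∈ W.rim.support
  · obtain ⟨t, ht, rfl⟩ := (W.arc_add_length 0).ge hrim
    exact .inl ⟨t, (ht.2.trans_eq (zero_add _)), rfl⟩
  · obtain ⟨i, hi⟩ := hx.resolve_left hrim
    exact .inr ⟨i, W.exists_getVert_eq_of_mem_shaft ⟨hi, hrim⟩⟩

end Shaft

section Coloring

/-- An edge-coloring that lets the wheel realize all colors between any two of its vertices:
the `i`-th spoke has color `i`, and so has the rim edge leaving the foot of the `i`-th spoke in the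
direction of traversal of the rim. The remaining edges may have any color. -/
structure IsSpokeColoring (c : Sym2 V → ι) : Prop where
  spoke : ∀ i, ∀ e ∈ (W.spoke i).edges, c e = i
  rim : ∀ i t, W.rimVert t = W.foot i → c s(W.rimVert t, W.rimVert (t + 1)) = i

theorem eq_of_mem_edges_spoke {i j : ι} {e : Sym2 V} (hi : e ∈ (W.spoke i).edges)
    (hj : e ∈ (W.spoke j).edges) : i = j := by
  by_contra hij
  induction e with | _ x y
  have hx := W.eq_hub i j hij x ((W.spoke i).fst_mem_support_of_mem_edges hi)
    ((W.spoke j).fst_mem_support_of_mem_edges hj)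
  have hy := W.eq_hub i j hij y ((W.spoke i).snd_mem_support_of_mem_edges hi)
    ((W.spoke j).snd_mem_support_of_mem_edges hj)
  exact ((W.spoke i).adj_of_mem_edges hi).ne (hx.trans hy.symm)

theorem rim_edge_notMem_edges_spoke (t : ℕ) (i : ι) :
    s(W.rimVert t, W.rimVert (t + 1)) ∉ (W.spoke i).edges := fun h ↦ by
  have ht := W.eq_foot i _ ((W.spoke i).fst_mem_support_of_mem_edges h) (W.rimVert_mem_rim _)
  have ht' := W.eq_foot i _ ((W.spoke i).snd_mem_support_of_mem_edges h) (W.rimVert_mem_rim _)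
  exact (W.rimVert_adj t).ne (ht.trans ht'.symm)

theorem rimVert_eq_of_rim_edge_eq {s t : ℕ}
    (h : s(W.rimVert s, W.rimVert (s + 1)) = s(W.rimVert t, W.rimVert (t + 1))) :
    W.rimVert s = W.rimVert t := by
  rcases Sym2.eq_iff.1 h with ⟨hst, -⟩ | ⟨hst, hts⟩
  · exact hst
  · have hmod : s + 0 ≡ s + 2 [MOD W.rim.length] :=
      (W.rimVert_eq_rimVert_iff.1 hst).trans ((W.rimVert_eq_rimVert_iff.1 hts).symm.add_right 1)
    have hdvd : W.rim.length ∣ 2 :=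
      (Nat.modEq_zero_iff_dvd).1 (Nat.ModEq.add_left_cancel' s hmod).symm
    exact absurd (Nat.le_of_dvd two_pos hdvd) (by have := W.three_le_length_rim; lia)

theorem exists_isSpokeColoring [Nonempty ι] : ∃ c : Sym2 V → ι, W.IsSpokeColoring c := by
  classical
  let colored (i : ι) : Set (Sym2 V) := {e | e ∈ (W.spoke i).edges ∨
    ∃ t, W.rimVert t = W.foot i ∧ s(W.rimVert t, W.rimVert (t + 1)) = e}
  have colored_unique {i j : ι} {e : Sym2 V} (hi : e ∈ colored i) (hj : e ∈ colored j) :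
      i = j := by
    rcases hi with hi | ⟨s, hs, rfl⟩ <;> rcases hj with hj | ⟨t, ht, hst⟩
    · exact W.eq_of_mem_edges_spoke hi hj
    · exact absurd (hst ▸ hi) (W.rim_edge_notMem_edges_spoke t i)
    · exact absurd hj (W.rim_edge_notMem_edges_spoke s j)
    · exact W.foot_injective (hs.symm.trans ((W.rimVert_eq_of_rim_edge_eq hst).symm.trans ht))
  let c (e : Sym2 V) : ι := if h : ∃ i, e ∈ colored i then h.choose else Classical.arbitrary ι
  have c_eq {i : ι} {e : Sym2 V} (h : e ∈ colored i) : c e = i := by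
    have hex : ∃ i, e ∈ colored i := ⟨i, h⟩
    rw [show c e = hex.choose from dif_pos hex]
    exact colored_unique hex.choose_spec h
  exact ⟨c, fun i e he ↦ c_eq (.inl he), fun i t ht ↦ c_eq (.inr ⟨t, ht, rfl⟩)⟩

variable {W} {c : Sym2 V → ι}

namespace IsSpokeColoring

theorem joinedWithin_rim (hc : W.IsSpokeColoring c) {a b : ℕ} (hab : a ≤ b)
    (hb : b < a + W.rim.length) :
    JoinedWithin G c (W.rimVert a) (W.rimVert b) (W.arc a (b + 1)) {j | W.foot j ∈ W.arc a b} := by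
  refine (JoinedWithin.of_injOn (f := W.rimVert) hab (fun n _ ↦ W.rimVert_adj n)
    ((W.injOn_rimVert a).mono (Set.Icc_subset_Ico_right hb))).mono ?_ ?_
  · exact Set.image_mono (Set.Icc_subset_Ico_right b.lt_succ_self)
  · rintro j ⟨n, hn, hnj⟩
    exact ⟨n, hn, hc.rim j n hnj⟩

theorem joinedWithin_spoke (hc : W.IsSpokeColoring c) {i : ι} {m n : ℕ} (hmn : m ≤ n)
    (hn : n ≤ (W.spoke i).length) :
    JoinedWithin G c ((W.spoke i).getVert m) ((W.spoke i).getVert n)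
      ((W.spoke i).getVert '' Set.Icc m n) {j | j = i ∧ m < n} := by
  refine (JoinedWithin.of_injOn (f := (W.spoke i).getVert) hmn
    (fun l hl ↦ (W.spoke i).adj_getVert_succ (hl.2.trans_le hn))
    ((W.spoke_isPath i).getVert_injOn.mono fun l hl ↦ hl.2.trans hn)).mono subset_rfl ?_
  rintro j ⟨rfl, hlt⟩
  refine ⟨m, ⟨le_rfl, hlt⟩, hc.spoke j _ ?_⟩
  exact (Walk.mk_mem_edges_iff_exists _).2 ⟨m, hlt.trans_le hn, rfl⟩

theorem joinedWithin_hub_of_foot (hc : W.IsSpokeColoring c) {u : V} {i : ι} {S : Set V} {K : Set ι}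
    (h : JoinedWithin G c u (W.foot i) S K) (hS : S ⊆ {x | x ∈ W.rim.support}) :
    JoinedWithin G c u W.hub (S ∪ W.shaft i) (insert i K) := by
  have spoke := (hc.joinedWithin_spoke (i := i) (Nat.zero_le _) le_rfl).symm
  rw [Walk.getVert_zero, Walk.getVert_length] at spoke
  have spoke_subset : (W.spoke i).getVert '' Set.Icc 0 (W.spoke i).length ⊆
      {x | x ∈ (W.spoke i).support} := by
    rintro _ ⟨n, -, rfl⟩
    exact (W.spoke i).getVert_mem_support n
  refine (h.trans spoke fun x hx ↦ W.eq_foot i x (spoke_subset hx.2) (hS hx.1)).mono ?_ ?_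
  · rintro x (hx | hx)
    · exact .inl hx
    · by_cases hrim : x ∈ W.rim.support
      · exact .inl (W.eq_foot i x (spoke_subset hx) hrim ▸ h.right_mem)
      · exact .inr ⟨spoke_subset hx, hrim⟩
  · rintro j (rfl | hj)
    exacts [.inr ⟨rfl, W.length_spoke_pos j⟩, .inl hj]

theorem exists_joinedWithin_hub_of_arc (hc : W.IsSpokeColoring c) {t e : ℕ}
    (he : e ≤ t + W.rim.length) {I : Set ι} (hI : ∃ i ∈ I, W.foot i ∈ W.arc t e) :
    ∃ i ∈ I, W.foot i ∈ W.arc t e ∧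
      JoinedWithin G c (W.rimVert t) W.hub (W.arc t e ∪ W.shaft i)
        {j ∈ I | W.foot j ∈ W.arc t e} := by
  obtain ⟨n, ⟨hn, i, hi, hni⟩, hlast⟩ :=
    Set.exists_max_image {n | n ∈ Set.Ico t e ∧ ∃ i ∈ I, W.rimVert n = W.foot i} id
      ((Set.finite_Ico t e).subset fun n hn ↦ hn.1)
      (by obtain ⟨i, hi, n, hn, hni⟩ := hI; exact ⟨n, hn, i, hi, hni⟩)
  have along := hc.joinedWithin_rim hn.1 (hn.2.trans_le he)
  rw [hni] at along
  refine ⟨i, hi, ⟨n, hn, hni⟩,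
    (hc.joinedWithin_hub_of_foot along (W.arc_subset_rim _ _)).mono ?_ ?_⟩
  · exact Set.union_subset_union_left _ (Set.image_mono (Set.Ico_subset_Ico_right hn.2))
  · rintro j ⟨hj, m, hm, hmj⟩
    rcases (hlast m ⟨hm, j, hj, hmj⟩).lt_or_eq with hmn | rfl
    · exact .inr ⟨m, ⟨hm.1, hmn⟩, hmj⟩
    · exact .inl (W.foot_injective (hmj.symm.trans hni))

theorem exists_joinedWithin_hub (hc : W.IsSpokeColoring c) (t : ℕ) {I : Set ι} (hI : I.Nonempty) :
    ∃ i ∈ I, JoinedWithin G c (W.rimVert t) W.hub ({x | x ∈ W.rim.support} ∪ W.shaft i) I := by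
  obtain ⟨i₀, hi₀⟩ := hI
  have foot_mem (i : ι) : W.foot i ∈ W.arc t (t + W.rim.length) :=
    (W.arc_add_length t).symm ▸ W.foot_mem_rim i
  obtain ⟨i, hi, -, h⟩ := hc.exists_joinedWithin_hub_of_arc le_rfl ⟨i₀, hi₀, foot_mem i₀⟩
  exact ⟨i, hi, h.mono (by rw [W.arc_add_length]) fun j hj ↦ ⟨hj, foot_mem j⟩⟩

theorem joinedWithin_rimVert_rimVert (hc : W.IsSpokeColoring c) {s t : ℕ} (hst : s < t)
    (ht : t < s + W.rim.length) :
    JoinedWithin G c (W.rimVert s) (W.rimVert t) W.verts Set.univ := by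
  have arcs : W.arc s t ∪ W.arc t (s + W.rim.length) = {x | x ∈ W.rim.support} := by
    rw [W.arc_union_arc hst.le ht.le, W.arc_add_length]
  have foot_mem (i : ι) : W.foot i ∈ W.arc s t ∨ W.foot i ∈ W.arc t (s + W.rim.length) :=
    arcs.ge (W.foot_mem_rim i)
  by_cases hfst : ∃ i, W.foot i ∈ W.arc s t
  · by_cases hsnd : ∃ i, W.foot i ∈ W.arc t (s + W.rim.length)
    · obtain ⟨i, -, hi, armₛ⟩ := hc.exists_joinedWithin_hub_of_arc (I := Set.univ) ht.le
        (by simpa using hfst)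
      obtain ⟨j, -, hj, armₜ⟩ := hc.exists_joinedWithin_hub_of_arc (I := Set.univ)
        (Nat.add_le_add_right hst.le _) (by simpa using hsnd)
      have hdisj := W.disjoint_arc_arc hst.le le_rfl
      have hij : i ≠ j := fun h ↦ hdisj.notMem_of_mem_left hi (h ▸ hj)
      have hmeet := W.arm_inter_arm_subset (W.arc_subset_rim _ _) (W.arc_subset_rim _ _) hdisj hij
      refine (armₛ.trans armₜ.symm hmeet).mono ?_ ?_
      · exact Set.union_subset
          (Set.union_subset ((W.arc_subset_rim _ _).trans W.rim_subset_verts)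
            (W.shaft_subset_verts i))
          (Set.union_subset ((W.arc_subset_rim _ _).trans W.rim_subset_verts)
            (W.shaft_subset_verts j))
      · exact fun l _ ↦ (foot_mem l).imp (⟨trivial, ·⟩) (⟨trivial, ·⟩)
    · exact (hc.joinedWithin_rim hst.le ht).mono
        ((W.arc_subset_rim _ _).trans W.rim_subset_verts)
        fun l _ ↦ (foot_mem l).resolve_right fun h ↦ hsnd ⟨l, h⟩
  · have around := hc.joinedWithin_rim ht.le (Nat.add_lt_add_right hst _)
    rw [W.rimVert_add_length] at around
    exact around.symm.mono ((W.arc_subset_rim _ _).trans W.rim_subset_verts)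
      fun l _ ↦ (foot_mem l).resolve_left fun h ↦ hfst ⟨l, h⟩

theorem joinedWithin_rimVert_spoke [Nontrivial ι] (hc : W.IsSpokeColoring c) (t : ℕ) {j : ι}
    {y : ℕ} (hy : y < (W.spoke j).length) :
    JoinedWithin G c (W.rimVert t) ((W.spoke j).getVert y) W.verts Set.univ := by
  let I : Set ι := {l | ¬(l = j ∧ 0 < y)}
  obtain ⟨i₀, hi₀⟩ := exists_ne j
  obtain ⟨i, hi, arm⟩ := hc.exists_joinedWithin_hub t (I := I) ⟨i₀, fun h ↦ hi₀ h.1⟩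
  have inner := hc.joinedWithin_spoke (Nat.zero_le y) hy.le
  rw [Walk.getVert_zero] at inner
  refine (arm.trans inner ?_).mono ?_ ?_
  · rintro _ ⟨hx | hx, m, hm, rfl⟩
    · exact absurd hx (W.getVert_mem_shaft (hm.2.trans_lt hy)).2
    · by_cases hij : i = j
      · have hy0 : y = 0 := Nat.eq_zero_of_not_pos fun h ↦ hi ⟨hij, h⟩
        have hm0 : m = 0 := Nat.eq_zero_of_le_zero (hy0 ▸ hm.2)
        rw [hm0, Walk.getVert_zero, Set.mem_singleton_iff]
      · exact W.shaft_inter_shaft_subset hij ⟨hx, W.getVert_mem_shaft (hm.2.trans_lt hy)⟩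
  · exact Set.union_subset (Set.union_subset W.rim_subset_verts (W.shaft_subset_verts i))
      (W.getVert_image_subset_verts j _)
  · exact fun l _ ↦ (em (l = j ∧ 0 < y)).symm

theorem exists_joinedWithin_spoke_hub (hc : W.IsSpokeColoring c) {i : ι} {x : ℕ} (hx : 0 < x)
    (hxi : x < (W.spoke i).length) {I : Set ι} (hI : I.Nonempty) (hiI : i ∉ I) :
    ∃ l ∈ I, JoinedWithin G c ((W.spoke i).getVert x) W.hub
      ((W.spoke i).getVert '' Set.Icc x (W.spoke i).length ∪
        ({x | x ∈ W.rim.support} ∪ W.shaft l)) (insert i I) := by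
  obtain ⟨t, -, ht⟩ := (W.arc_add_length 0).ge (W.foot_mem_rim i)
  obtain ⟨l, hl, arm⟩ := hc.exists_joinedWithin_hub t hI
  have outer := hc.joinedWithin_spoke hxi.le le_rfl
  rw [Walk.getVert_length] at outer
  rw [ht] at arm
  refine ⟨l, hl, (outer.trans arm ?_).mono subset_rfl ?_⟩
  · rintro _ ⟨⟨m, hm, rfl⟩, hrim | hshaft⟩
    · exact W.eq_foot i _ ((W.spoke i).getVert_mem_support m) hrim
    · have hli : i ≠ l := fun h ↦ hiI (h ▸ hl)
      exact absurd (W.eq_hub i l hli _ ((W.spoke i).getVert_mem_support m) hshaft.1)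
        (W.getVert_ne_hub (hx.trans_le hm.1) hm.2)
  · exact Set.insert_subset (.inl ⟨rfl, hxi⟩) Set.subset_union_right

theorem joinedWithin_spoke_spoke (hι : 3 ≤ Nat.card ι) (hc : W.IsSpokeColoring c) {i j : ι}
    {x y : ℕ} (hx : 0 < x) (hxi : x < (W.spoke i).length) (hyj : y < (W.spoke j).length)
    (hxy : i = j ∧ y < x ∨ i ≠ j ∧ 0 < y) :
    JoinedWithin G c ((W.spoke i).getVert x) ((W.spoke j).getVert y) W.verts Set.univ := by
  have : Finite ι := Nat.finite_of_card_ne_zero (by lia)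
  have hI : ({i, j}ᶜ : Set ι).Nonempty := Set.nonempty_compl.2 fun h ↦ by
    have hcard := Set.ncard_insert_le i {j}
    rw [h, Set.ncard_univ, Set.ncard_singleton] at hcard
    lia
  obtain ⟨l, hl, outer⟩ := hc.exists_joinedWithin_spoke_hub hx hxi hI (by simp)
  have inner := hc.joinedWithin_spoke (Nat.zero_le y) hyj.le
  rw [Walk.getVert_zero] at inner
  have hlj : l ≠ j := fun h ↦ hl (.inr h)
  refine (outer.trans inner ?_).mono ?_ ?_
  · rintro _ ⟨⟨m, hm, hmn⟩ | hrim | hshaft, n, hn, rfl⟩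
    · rcases hxy with ⟨rfl, hyx⟩ | ⟨hij, -⟩
      · have : m = n := (W.spoke_isPath i).getVert_injOn hm.2 (hn.2.trans hyj.le) hmn
        exact absurd (hm.1.trans_eq this) (hn.2.trans_lt hyx).not_ge
      · exact W.eq_hub i j hij _ (hmn ▸ (W.spoke i).getVert_mem_support m)
          ((W.spoke j).getVert_mem_support n)
    · exact absurd hrim (W.getVert_mem_shaft (hn.2.trans_lt hyj)).2
    · exact W.shaft_inter_shaft_subset hlj ⟨hshaft, W.getVert_mem_shaft (hn.2.trans_lt hyj)⟩
  · exact Set.union_subset (Set.union_subset (W.getVert_image_subset_verts i _)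
      (Set.union_subset W.rim_subset_verts (W.shaft_subset_verts l)))
      (W.getVert_image_subset_verts j _)
  · intro l _
    by_cases hli : l = i
    · exact .inl (.inl hli)
    · by_cases hlj : l = j
      · refine .inr ⟨hlj, ?_⟩
        rcases hxy with ⟨hij, -⟩ | ⟨-, hy⟩
        exacts [absurd (hlj.trans hij.symm) hli, hy]
      · exact .inl (.inr fun h ↦ h.elim hli hlj)

theorem joinedWithin_shaft_shaft (hι : 3 ≤ Nat.card ι) (hc : W.IsSpokeColoring c) {i j : ι}
    {x y : ℕ} (hxi : x < (W.spoke i).length) (hyj : y < (W.spoke j).length)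
    (hne : (W.spoke i).getVert x ≠ (W.spoke j).getVert y) :
    JoinedWithin G c ((W.spoke i).getVert x) ((W.spoke j).getVert y) W.verts Set.univ := by
  by_cases hij : i = j
  · subst hij
    rcases lt_trichotomy x y with hlt | rfl | hgt
    · exact (hc.joinedWithin_spoke_spoke hι (x.zero_le.trans_lt hlt) hyj hxi (.inl ⟨rfl, hlt⟩)).symm
    · exact absurd rfl hne
    · exact hc.joinedWithin_spoke_spoke hι (y.zero_le.trans_lt hgt) hxi hyj (.inl ⟨rfl, hgt⟩)
  · have getVert_zero_eq : (W.spoke i).getVert 0 = (W.spoke j).getVert 0 := by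
      rw [Walk.getVert_zero, Walk.getVert_zero]
    rcases x.eq_zero_or_pos with rfl | hx <;> rcases y.eq_zero_or_pos with rfl | hy
    · exact absurd getVert_zero_eq hne
    · rw [getVert_zero_eq]
      exact (hc.joinedWithin_spoke_spoke hι hy hyj (W.length_spoke_pos j) (.inl ⟨rfl, hy⟩)).symm
    · rw [← getVert_zero_eq]
      exact hc.joinedWithin_spoke_spoke hι hx hxi (W.length_spoke_pos i) (.inl ⟨rfl, hx⟩)
    · exact hc.joinedWithin_spoke_spoke hι hx hxi hyj (.inr ⟨hij, hy⟩)

theorem joinedWithin_verts (hι : 3 ≤ Nat.card ι) (hc : W.IsSpokeColoring c) {u v : V}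
    (hu : u ∈ W.verts) (hv : v ∈ W.verts) (huv : u ≠ v) :
    JoinedWithin G c u v W.verts Set.univ := by
  have : Finite ι := Nat.finite_of_card_ne_zero (by lia)
  have : Nontrivial ι := Finite.one_lt_card_iff_nontrivial.1 (by lia)
  rcases W.eq_rimVert_or_eq_getVert hu with ⟨s, hs, rfl⟩ | ⟨i, x, hx, rfl⟩ <;>
    rcases W.eq_rimVert_or_eq_getVert hv with ⟨t, ht, rfl⟩ | ⟨j, y, hy, rfl⟩
  · rcases lt_trichotomy s t with hst | rfl | hts
    · exact hc.joinedWithin_rimVert_rimVert hst (by lia)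
    · exact absurd rfl huv
    · exact (hc.joinedWithin_rimVert_rimVert hts (by lia)).symm
  · exact hc.joinedWithin_rimVert_spoke s hy
  · exact (hc.joinedWithin_rimVert_spoke t hx).symm
  · exact hc.joinedWithin_shaft_shaft hι hx hy huv

end IsSpokeColoring

end Coloring

end SubdividedWheel

section WheelExistence

variable {V ι : Type*} {G : SimpleGraph V} {k : ℕ} {r u v : V}

theorem notMem_support_deleteIncidenceSet (p : (G.deleteIncidenceSet r).Walk u v) (hu : u ≠ r) :
    r ∉ p.support := by
  induction p with
  | nil => simpa using hu.symm
  | cons h p ih =>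
    rw [Walk.support_cons, List.mem_cons, not_or]
    exact ⟨hu.symm, ih ((G.deleteIncidenceSet_adj).1 h).2.2⟩

theorem le_ncard_neighborSet_deleteIncidenceSet [Finite V] (hG : G.IsKConnectedGraph k)
    (hv : v ≠ r) : k - 1 ≤ ((G.deleteIncidenceSet r).neighborSet v).ncard := by
  have neighborSet_eq : (G.deleteIncidenceSet r).neighborSet v = G.neighborSet v \ {r} := by
    ext x
    simp [deleteIncidenceSet_adj, hv]
  rw [neighborSet_eq]
  exact (Nat.sub_le_sub_right (le_ncard_neighborSet hG v) 1).trans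
    (Set.pred_ncard_le_ncard_sdiff_singleton _ _)

theorem deleteIncidenceSet_ne_bot [Finite V] (hG : G.IsKConnectedGraph 2) (r : V) :
    G.deleteIncidenceSet r ≠ ⊥ := by
  have : Nontrivial V := Finite.one_lt_card_iff_nontrivial.1 (one_lt_two.trans hG.1)
  obtain ⟨v, hv⟩ := exists_ne r
  obtain ⟨x, hx⟩ := Set.nonempty_of_ncard_ne_zero
    (one_pos.trans_le (le_ncard_neighborSet_deleteIncidenceSet hG hv)).ne'
  exact SimpleGraph.ne_bot_iff_exists_adj.2 ⟨v, x, hx⟩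

theorem le_ncard_of_isSeparator_deleteIncidenceSet [Finite V] (hG : G.IsKConnectedGraph k)
    {B S : Set V} (hB : k ≤ B.ncard) (hr : r ∉ B)
    (hS : IsSeparator (G.deleteIncidenceSet r) (G.neighborSet r) B S) : k ≤ S.ncard := by
  by_contra! hlt
  obtain ⟨b, hbB, hbS⟩ := Set.exists_mem_notMem_of_ncard_lt_ncard (hlt.trans_le hB)
  obtain ⟨p, hp, avoids⟩ := exists_isPath_avoiding hG (S := S \ {r})
    ((Set.ncard_sdiff_singleton_le S r).trans_lt hlt) (fun h ↦ h.2 rfl) (fun h ↦ hbS h.1)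
  cases p with
  | nil => exact hr hbB
  | cons h p =>
    have hrp : r ∉ p.support := ((Walk.cons_isPath_iff h p).1 hp).2
    let q := p.transfer (G.deleteIncidenceSet r) fun e he ↦ by
      induction e with | _ x y
      refine (G.deleteIncidenceSet_adj).2 ⟨p.adj_of_mem_edges he, ?_, ?_⟩
      · exact fun hx ↦ hrp (hx ▸ p.fst_mem_support_of_mem_edges he)
      · exact fun hy ↦ hrp (hy ▸ p.snd_mem_support_of_mem_edges he)
    obtain ⟨x, hxq, hxS⟩ := hS _ h b hbB q
    rw [Walk.support_transfer] at hxq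
    exact avoids x (List.mem_cons_of_mem _ hxq) ⟨hxS, fun hxr ↦ hrp (hxr ▸ hxq)⟩

/-- The wheel whose rim is a cycle `C` avoiding `r`, and whose spokes lead from the hub `r` over
its neighbors along the paths of a linkage. -/
def SubdividedWheel.ofLinkage {C : (G.deleteIncidenceSet r).Walk v v} (hC : C.IsCycle)
    (hr : r ∉ C.support)
    (L : Linkage (G.deleteIncidenceSet r) (G.neighborSet r) {x | x ∈ C.support} ι) :
    SubdividedWheel G ι where
  base := v
  rim := C.mapLe (G.deleteIncidenceSet_le r)
  rim_isCycle := hC.mapLe _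
  hub := r
  hub_notMem_rim := by rwa [Walk.support_mapLe_eq_support]
  foot := L.target
  foot_mem_rim i := by
    rw [Walk.support_mapLe_eq_support]
    exact L.target_mem i
  spoke i := .cons ((G.mem_neighborSet r _).1 (L.source_mem i))
    ((L.path i).mapLe (G.deleteIncidenceSet_le r))
  spoke_isPath i := by
    refine ((L.isPath i).mapLe _).cons ?_
    rw [Walk.support_mapLe_eq_support]
    exact notMem_support_deleteIncidenceSet _ (L.source_mem i).ne'
  eq_foot i x hx hxC := by
    rw [Walk.support_cons, Walk.support_mapLe_eq_support] at hx
    rw [Walk.support_mapLe_eq_support] at hxC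
    rcases List.mem_cons.1 hx with rfl | hx
    exacts [absurd hxC hr, L.eq_target i x hx hxC]
  eq_hub i j hij x hxi hxj := by
    rw [Walk.support_cons, Walk.support_mapLe_eq_support, List.mem_cons] at hxi hxj
    by_contra hxr
    exact hij (L.eq_of_mem_support i j x (hxi.resolve_left hxr) (hxj.resolve_left hxr))

theorem nonempty_subdividedWheel [Finite V] (hk : 3 ≤ k) (hG : G.IsKConnectedGraph k) :
    Nonempty (SubdividedWheel G (Fin k)) := by
  obtain ⟨r⟩ : Nonempty V := (Nat.card_pos_iff.1 (k.zero_le.trans_lt hG.1)).1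
  have ne_of_mem_support {v : V} (hv : v ∈ (G.deleteIncidenceSet r).support) : v ≠ r := by
    obtain ⟨x, hx⟩ := hv
    exact ((G.deleteIncidenceSet_adj).1 hx).2.1
  obtain ⟨v, C, hC, hlen⟩ := exists_isCycle_lt_length (d := k - 1) (by lia)
    (deleteIncidenceSet_ne_bot (isKConnectedGraph_mono hG (by lia)) r)
    fun v hv ↦ le_ncard_neighborSet_deleteIncidenceSet hG (ne_of_mem_support hv)
  have hr : r ∉ C.support :=
    notMem_support_deleteIncidenceSet C (ne_of_mem_support ⟨C.snd, C.adj_snd hC.not_nil⟩)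
  have card_rim : k ≤ {x | x ∈ C.support}.ncard := by
    have := length_le_ncard_support hC
    lia
  obtain ⟨L⟩ : Nonempty (Linkage (G.deleteIncidenceSet r) (G.neighborSet r)
      {x | x ∈ C.support} (Fin k)) := nonempty_linkage fun S hS ↦ by
    simpa using le_ncard_of_isSeparator_deleteIncidenceSet hG card_rim hr hS
  exact ⟨.ofLinkage hC hr L⟩

end WheelExistence

section ColorConnection

variable {V : Type*} {G : SimpleGraph V} {k : ℕ}

theorem isKColorConnecting_val {c : Sym2 V → Fin k}
    (hc : ∀ u v, u ≠ v → JoinedWithin G c u v Set.univ Set.univ) :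
    G.IsKColorConnecting k fun e ↦ c e := by
  intro u v huv
  obtain ⟨p, hp, -, hcol⟩ := hc u v huv
  refine ⟨p, hp, ?_⟩
  have range_subset : Finset.range k ⊆ (p.edges.map fun e ↦ (c e : ℕ)).toFinset := fun n hn ↦ by
    obtain ⟨e, he, hen⟩ := hcol (Set.mem_univ ⟨n, Finset.mem_range.1 hn⟩)
    exact List.mem_toFinset.2 (List.mem_map.2 ⟨e, he, congrArg Fin.val hen⟩)
  simpa using Finset.card_le_card range_subset

theorem le_ncard_image_edgeSet [Finite V] [Nontrivial V] {c : Sym2 V → ℕ}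
    (hc : G.IsKColorConnecting k c) : k ≤ (c '' G.edgeSet).ncard := by
  obtain ⟨u, v, huv⟩ := exists_pair_ne V
  obtain ⟨p, -, hk⟩ := hc u v huv
  refine hk.trans ?_
  rw [← Set.ncard_coe_finset]
  refine Set.ncard_le_ncard (fun n hn ↦ ?_) (Set.toFinite _)
  obtain ⟨e, he, rfl⟩ := List.mem_map.1 (List.mem_toFinset.1 hn)
  exact ⟨e, p.edges_subset_edgeSet he, rfl⟩

theorem kColorConnectable_and_ccConn_eq [Finite V] [Nontrivial V] {c : Sym2 V → Fin k}
    (hc : ∀ u v, u ≠ v → JoinedWithin G c u v Set.univ Set.univ) :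
    G.KColorConnectable k ∧ G.ccConn k = k := by
  have connecting := isKColorConnecting_val hc
  have ncard_le : ((fun e ↦ (c e : ℕ)) '' G.edgeSet).ncard ≤ k := by
    have image_subset : (fun e ↦ (c e : ℕ)) '' G.edgeSet ⊆ Finset.range k := by
      rintro _ ⟨e, -, rfl⟩
      simp
    simpa using Set.ncard_le_ncard image_subset (Finset.finite_toSet _)
  have mem : ((fun e ↦ (c e : ℕ)) '' G.edgeSet).ncard ∈ {n : ℕ | ∃ c : Sym2 V → ℕ,
      G.IsKColorConnecting k c ∧ (c '' G.edgeSet).ncard = n} := ⟨_, connecting, rfl⟩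
  refine ⟨⟨_, connecting⟩, le_antisymm ((Nat.sInf_le mem).trans ncard_le) ?_⟩
  obtain ⟨c', hc', hcard⟩ := Nat.sInf_mem ⟨_, mem⟩
  exact (le_ncard_image_edgeSet hc').trans_eq hcard

end ColorConnection

theorem exists_coloring_of_isKConnectedGraph {V : Type*} [Finite V] {G : SimpleGraph V} {k : ℕ}
    (hk : 3 ≤ k) (hG : G.IsKConnectedGraph k) :
    ∃ c : Sym2 V → Fin k, ∀ u v, u ≠ v → JoinedWithin G c u v Set.univ Set.univ := by
  obtain ⟨W⟩ := nonempty_subdividedWheel hk hG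
  have : Nonempty (Fin k) := ⟨⟨0, by lia⟩⟩
  obtain ⟨c, hc⟩ := W.exists_isSpokeColoring
  refine ⟨c, fun u v huv ↦ ?_⟩
  obtain ⟨x, hx, y, hy, hxy, extend⟩ := exists_joinedWithin_extension
    (isKConnectedGraph_mono hG (by lia)) W.two_le_ncard_verts huv c
  exact extend _ (hc.joinedWithin_verts (by rwa [Nat.card_fin]) hx hy hxy)

theorem stmt_12 {V : Type*} [Fintype V] (G : SimpleGraph V) (k : ℕ) (hk : 2 ≤ k)
    (hn : 4 ≤ Fintype.card V) (hG : G.IsKConnectedGraph k) :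
    G.KColorConnectable k ∧ G.ccConn k = k := by
  have : Nontrivial V := Fintype.one_lt_card_iff_nontrivial.1 (by lia)
  obtain ⟨c, hc⟩ : ∃ c : Sym2 V → Fin k, ∀ u v, u ≠ v →
      JoinedWithin G c u v Set.univ Set.univ := by
    rcases hk.eq_or_lt with rfl | hk
    · exact exists_two_coloring_of_isKConnectedGraph (by rwa [Nat.card_eq_fintype_card]) hG
    · exact exists_coloring_of_isKConnectedGraph hk hG
  exact kColorConnectable_and_ccConn_eq hc
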